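/- With the Lie-algebra setup below (Case A), let the bracket be [x₁,x₂] = λ₁x₁ + λ₂x₂, [x₂,x₃] = ν₂x₂ − λ₁x₃, [x₁,x₃] = ν₂x₁ + λ₂x₃ for real constants λ₁, λ₂, ν₂. Then: (1) this bracket satisfies the Jacobi identity; (2) R(x₁,x₂,x₁,x₂) = R(x₁,x₃,x₁,x₃) = R(x₂,x₃,x₂,x₃) = λ₁² + λ₂² + ν₂², and all curvature components R(xᵢ,xⱼ,xₖ,xₗ) not obtained from these by the curvature symmetries vanish; (3) ρ(xᵢ,xⱼ) = −2(λ₁² + λ₂² + ν₂²) if i = j and 0 if i ≠ j, the scalar curvature is τ = −6(λ₁² + λ₂² + ν₂²), and ρ = (τ/3)·g, i.e. the manifold is Einstein; (4) for every pair of linearly independent vectors x, y ∈ ℝ³ the sectional curvature k(x,y) = R(x,y,x,y)/(g(x,x)g(y,y) − g(x,y)²) equals λ₁² + λ₂² + ν₂². -/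

import Mathlib

open scoped BigOperators

/-- The underlying vector space ℝ³. -/
abbrev V := Fin 3 → ℝ

/-- The standard basis `x₁, x₂, x₃` of ℝ³ (indexed from 0). -/
def e (i : Fin 3) : V := Pi.single i 1

/-- The standard inner product `g` on ℝ³ (the basis `e` is orthonormal). -/
def ip (x y : V) : ℝ := ∑ i, x i * y i

/-- The circulant structure `Q`: `Q x₁ = x₂`, `Q x₂ = x₃`, `Q x₃ = x₁`. -/
def Qv (x : V) : V := fun j => x (j - 1)

/-- The associated metric `g̃(y,z) = g(y,Qz) + g(Qy,z)`. -/
def gtil (x y : V) : ℝ := ip x (Qv y) + ip (Qv x) y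

/-- Bilinearity of a map `V → V → V`. -/
def Bilin (f : V → V → V) : Prop :=
  (∀ (a : ℝ) (x y z : V), f (a • x + y) z = a • f x z + f y z) ∧
  (∀ (a : ℝ) (x y z : V), f x (a • y + z) = a • f x y + f x z)

/-- Skew-symmetry of a map `V → V → V`. -/
def Skew (f : V → V → V) : Prop := ∀ x y, f x y = - f y x

/-- The Jacobi identity for a bracket. -/
def Jacobi (br : V → V → V) : Prop :=
  ∀ x y z, br x (br y z) + br y (br z x) + br z (br x y) = 0

/-- The Koszul formula determining the Levi-Civita connection `∇` of the
left-invariant metric `g` on the basis: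
`2g(∇_{xᵢ}xⱼ, xₖ) = g([xᵢ,xⱼ],xₖ) + g([xₖ,xᵢ],xⱼ) + g([xₖ,xⱼ],xᵢ)`. -/
def Koszul (br nabla : V → V → V) : Prop :=
  ∀ i j k : Fin 3, 2 * ip (nabla (e i) (e j)) (e k) =
    ip (br (e i) (e j)) (e k) + ip (br (e k) (e i)) (e j) + ip (br (e k) (e j)) (e i)

/-- The curvature operator `R(x,y)z = ∇ₓ∇_y z − ∇_y∇ₓz − ∇_{[x,y]}z`. -/
def Rop (br nabla : V → V → V) (x y z : V) : V :=
  nabla x (nabla y z) - nabla y (nabla x z) - nabla (br x y) z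

/-- The curvature tensor of type (0,4): `R(x,y,z,u) = g(R(x,y)z, u)`. -/
def Rten (br nabla : V → V → V) (x y z u : V) : ℝ := ip (Rop br nabla x y z) u

/-- The Ricci tensor `ρ(y,z) = Σᵢ R(xᵢ,y,z,xᵢ)`. -/
def ricci (br nabla : V → V → V) (y z : V) : ℝ := ∑ i, Rten br nabla (e i) y z (e i)

/-- The scalar curvature `τ = Σᵢ ρ(xᵢ,xᵢ)`. -/
def scalc (br nabla : V → V → V) : ℝ := ∑ i, ricci br nabla (e i) (e i)

/-- The fundamental tensor `F(x,y,z) = −g̃(∇ₓy, z) − g̃(y, ∇ₓz)`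
(the covariant derivative of `g̃`, which has constant components in this frame). -/
def Fop (nabla : V → V → V) (x y z : V) : ℝ := -(gtil (nabla x y) z) - gtil y (nabla x z)

/-- The Lee form `θₖ = Σᵢ F(xᵢ,xᵢ,xₖ)`. -/
def lee (nabla : V → V → V) (k : Fin 3) : ℝ := ∑ i, Fop nabla (e i) (e i) (e k)

/-- The Lee form `θ*ₖ = Σᵢ F(xᵢ,Qxᵢ,xₖ)`. -/
def leeStar (nabla : V → V → V) (k : Fin 3) : ℝ := ∑ i, Fop nabla (e i) (Qv (e i)) (e k)

/-! A bracket of Case A has the form `[x, y] = φ(x)y − φ(y)x` for the linear form `φ = g(ξ, ·)` with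
`ξ = (λ₂, −λ₁, −ν₂)`. Its Levi-Civita connection is then `∇ₓy = g(x, y)ξ − φ(y)x`, and the quadratic
terms of the curvature combine to
`R(x, y, z, u) = g(ξ, ξ)(g(x, z)g(y, u) − g(y, z)g(x, u))`, so the curvature is constant, equal to
`g(ξ, ξ) = λ₁² + λ₂² + ν₂²`. -/

section VectorType

variable {R M : Type*} [CommRing R] [AddCommGroup M] [Module R M]

/-- The bracket of vector type `[x, y] = φ(x)y − φ(y)x` attached to a linear form `φ`. -/
def vectorBracket (φ : Module.Dual R M) (x y : M) : M := φ x • y - φ y • x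

/-- The Levi-Civita connection `∇ₓy = B(x, y)ξ − B(ξ, y)x` of the metric `B` for the vector-type
bracket attached to the linear form `B(ξ, ·)`. -/
def vectorConnection (B : LinearMap.BilinForm R M) (ξ x y : M) : M := B x y • ξ - B ξ y • x

theorem vectorBracket_jacobi (φ : Module.Dual R M) (x y z : M) :
    vectorBracket φ x (vectorBracket φ y z) + vectorBracket φ y (vectorBracket φ z x) +
      vectorBracket φ z (vectorBracket φ x y) = 0 := by
  simp only [vectorBracket, map_sub, map_smul, smul_eq_mul]
  module

theorem vectorConnection_koszul {B : LinearMap.BilinForm R M} (hB : B.IsSymm) (ξ x y z : M) :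
    2 * B (vectorConnection B ξ x y) z =
      B (vectorBracket (B ξ) x y) z + B (vectorBracket (B ξ) z x) y +
        B (vectorBracket (B ξ) z y) x := by
  simp only [vectorConnection, vectorBracket, map_sub, map_smul, LinearMap.sub_apply,
    LinearMap.smul_apply, smul_eq_mul]
  rw [hB.eq y x, hB.eq z x, hB.eq z y]
  ring

theorem vectorConnection_curvature {B : LinearMap.BilinForm R M} (hB : B.IsSymm) (ξ x y z : M) :
    vectorConnection B ξ x (vectorConnection B ξ y z) -
        vectorConnection B ξ y (vectorConnection B ξ x z) -
        vectorConnection B ξ (vectorBracket (B ξ) x y) z =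
      B ξ ξ • (B x z • y - B y z • x) := by
  simp only [vectorConnection, vectorBracket, map_sub, map_smul, LinearMap.sub_apply,
    LinearMap.smul_apply, smul_eq_mul]
  rw [hB.eq x ξ, hB.eq y ξ, hB.eq y x]
  module

end VectorType

theorem gram_det_pos {ι : Type*} [Fintype ι] {x y : ι → ℝ} (h : LinearIndependent ℝ ![x, y]) :
    0 < (x ⬝ᵥ x) * (y ⬝ᵥ y) - (x ⬝ᵥ y) ^ 2 := by
  let A : Matrix (Fin 2) ι ℝ := Matrix.of ![x, y]
  have hpos : (A * A.conjTranspose).PosDef :=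
    Matrix.PosDef.mul_conjTranspose_self A (Matrix.vecMul_injective_iff.mpr h)
  calc
    0 < (A * A.conjTranspose).det := hpos.det_pos
    _ = (x ⬝ᵥ x) * (y ⬝ᵥ y) - (x ⬝ᵥ y) * (y ⬝ᵥ x) := Matrix.det_fin_two _
    _ = (x ⬝ᵥ x) * (y ⬝ᵥ y) - (x ⬝ᵥ y) ^ 2 := by rw [dotProduct_comm y x, sq]

/-- The standard inner product `ip`, as a bilinear form. -/
def ipForm : LinearMap.BilinForm ℝ V := dotProductBilin ℝ ℝ

theorem ipForm_apply (x y : V) : ipForm x y = ip x y := rfl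

theorem ip_comm (x y : V) : ip x y = ip y x := dotProduct_comm x y

theorem ipForm_isSymm : ipForm.IsSymm := ⟨ip_comm⟩

theorem ip_e_right (x : V) (i : Fin 3) : ip x (e i) = x i := dotProduct_single_one x i

theorem ip_e_left (i : Fin 3) (x : V) : ip (e i) x = x i := single_one_dotProduct i x

theorem ip_e_e (i j : Fin 3) : ip (e i) (e j) = if i = j then 1 else 0 := by
  rw [ip_e_left, e, Pi.single_apply]

theorem Bilin.zero_left {f : V → V → V} (hf : Bilin f) (z : V) : f 0 z = 0 := by
  simpa using hf.1 1 0 0 z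

theorem Bilin.zero_right {f : V → V → V} (hf : Bilin f) (z : V) : f z 0 = 0 := by
  simpa using hf.2 1 z 0 0

/-- A map satisfying `Bilin`, bundled as a linear map in each argument. -/
def Bilin.toLinearMap₂ {f : V → V → V} (hf : Bilin f) : V →ₗ[ℝ] V →ₗ[ℝ] V :=
  LinearMap.mk₂ ℝ f
    (fun x y z => by simpa using hf.1 1 x y z)
    (fun a x z => by simpa [hf.zero_left] using hf.1 a x 0 z)
    (fun x y z => by simpa using hf.2 1 x y z)
    (fun a x y => by simpa [hf.zero_right] using hf.2 a x y 0)

theorem Bilin.ext_frame {f f' : V → V → V} (hf : Bilin f) (hf' : Bilin f')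
    (h : ∀ i j, f (e i) (e j) = f' (e i) (e j)) : f = f' := by
  have hlin : hf.toLinearMap₂ = hf'.toLinearMap₂ :=
    LinearMap.ext_basis (Pi.basisFun ℝ (Fin 3)) (Pi.basisFun ℝ (Fin 3)) fun i j => by
      rw [Pi.basisFun_apply, Pi.basisFun_apply]
      exact h i j
  exact funext₂ (LinearMap.congr_fun₂ hlin)

theorem Skew.self_eq_zero {f : V → V → V} (hf : Skew f) (x : V) : f x x = 0 :=
  self_eq_neg.mp (hf x x)

theorem Bilin.ext_frame_of_skew {f f' : V → V → V} (hf : Bilin f) (hf' : Bilin f')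
    (hs : Skew f) (hs' : Skew f') (h : ∀ i j, i < j → f (e i) (e j) = f' (e i) (e j)) :
    f = f' := by
  refine hf.ext_frame hf' fun i j => ?_
  rcases lt_trichotomy i j with hij | rfl | hji
  · exact h i j hij
  · rw [hs.self_eq_zero, hs'.self_eq_zero]
  · rw [hs, hs', h j i hji]

theorem vectorBracket_bilin (φ : Module.Dual ℝ V) : Bilin (vectorBracket φ) := by
  constructor <;> intro a x y z <;>
    simp only [vectorBracket, map_add, map_smul, smul_eq_mul] <;> module

theorem vectorBracket_skew (φ : Module.Dual ℝ V) : Skew (vectorBracket φ) :=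
  fun x y => (neg_sub (φ y • x) (φ x • y)).symm

theorem vectorConnection_bilin (B : LinearMap.BilinForm ℝ V) (ξ : V) :
    Bilin (vectorConnection B ξ) := by
  constructor <;> intro a x y z <;>
    simp only [vectorConnection, map_add, map_smul, LinearMap.add_apply, LinearMap.smul_apply,
      smul_eq_mul] <;> module

theorem Koszul.unique {br nabla nabla' : V → V → V} (h : Koszul br nabla)
    (h' : Koszul br nabla') (hn : Bilin nabla) (hn' : Bilin nabla') : nabla = nabla' := by
  refine hn.ext_frame hn' fun i j => funext fun k => ?_
  have hk : 2 * ip (nabla (e i) (e j)) (e k) = 2 * ip (nabla' (e i) (e j)) (e k) :=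
    (h i j k).trans (h' i j k).symm
  simpa only [ip_e_right] using mul_left_cancel₀ two_ne_zero hk

theorem Koszul.eq_vectorConnection {nabla : V → V → V} {ξ : V}
    (hkos : Koszul (vectorBracket (ipForm ξ)) nabla) (hbil : Bilin nabla) :
    nabla = vectorConnection ipForm ξ :=
  hkos.unique (fun i j k => vectorConnection_koszul ipForm_isSymm ξ (e i) (e j) (e k)) hbil
    (vectorConnection_bilin ipForm ξ)

/-- The curvature tensor is that of a space of constant sectional curvature `K`, with sectional
curvature normalised as `R(x, y, x, y)` over the Gram determinant. For this `R` the sign is opposite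
to the usual one: hyperbolic space has `K > 0`. -/
def HasConstantCurvature (br nabla : V → V → V) (K : ℝ) : Prop :=
  ∀ x y z u, Rten br nabla x y z u = K * (ip x z * ip y u - ip y z * ip x u)

theorem hasConstantCurvature_vectorConnection (ξ : V) :
    HasConstantCurvature (vectorBracket (ipForm ξ)) (vectorConnection ipForm ξ) (ip ξ ξ) := by
  intro x y z u
  rw [Rten, Rop, vectorConnection_curvature ipForm_isSymm]
  simp only [← ipForm_apply, map_sub, map_smul, LinearMap.sub_apply, LinearMap.smul_apply,
    smul_eq_mul]

namespace HasConstantCurvature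

variable {br nabla : V → V → V} {K : ℝ}

theorem rten_e (h : HasConstantCurvature br nabla K) (i j k l : Fin 3) :
    Rten br nabla (e i) (e j) (e k) (e l) =
      K * ((if i = k then 1 else 0) * (if j = l then 1 else 0) -
        (if j = k then 1 else 0) * (if i = l then 1 else 0)) := by
  simp only [h _ _ _ _, ip_e_e]

theorem ricci_eq (h : HasConstantCurvature br nabla K) (y z : V) :
    ricci br nabla y z = -2 * K * ip y z := by
  calc
    ricci br nabla y z = ∑ i, K * (z i * y i - ip y z * ip (e i) (e i)) := by
      simp only [ricci, h _ _ _ _, ip_e_left _ z, ip_e_right y]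
    _ = K * (ip z y - 3 * ip y z) := by
      rw [← Finset.mul_sum, Finset.sum_sub_distrib, ← Finset.mul_sum, ← ip]
      simp only [ip_e_e, if_true, Fin.sum_univ_three]
      ring
    _ = -2 * K * ip y z := by
      rw [ip_comm z y]
      ring

theorem scalc_eq (h : HasConstantCurvature br nabla K) : scalc br nabla = -6 * K := by
  simp only [scalc, h.ricci_eq, ip_e_e, if_true, Fin.sum_univ_three]
  ring

theorem ricci_eq_scalc (h : HasConstantCurvature br nabla K) (x y : V) :
    ricci br nabla x y = scalc br nabla / 3 * ip x y := by
  rw [h.ricci_eq, h.scalc_eq]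
  ring

theorem sectional_eq (h : HasConstantCurvature br nabla K) {x y : V}
    (hxy : LinearIndependent ℝ ![x, y]) :
    Rten br nabla x y x y / (ip x x * ip y y - ip x y ^ 2) = K := by
  rw [h, ip_comm y x, ← sq]
  exact mul_div_cancel_right₀ K (gram_det_pos hxy).ne'

end HasConstantCurvature

/-- The vector `ξ` for which the Case A bracket is `[x, y] = g(ξ, x)y − g(ξ, y)x`. -/
def caseAVector (l1 l2 n2 : ℝ) : V := ![l2, -l1, -n2]

theorem ip_caseAVector_self (l1 l2 n2 : ℝ) :
    ip (caseAVector l1 l2 n2) (caseAVector l1 l2 n2) = l1 ^ 2 + l2 ^ 2 + n2 ^ 2 := by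
  simp only [ip, caseAVector, Fin.sum_univ_three, Matrix.cons_val]
  ring

theorem Bilin.eq_vectorBracket_caseAVector {br : V → V → V} (hbil : Bilin br) (hskew : Skew br)
    {l1 l2 n2 : ℝ} (h12 : br (e 0) (e 1) = l1 • e 0 + l2 • e 1)
    (h23 : br (e 1) (e 2) = n2 • e 1 - l1 • e 2)
    (h13 : br (e 0) (e 2) = n2 • e 0 + l2 • e 2) :
    br = vectorBracket (ipForm (caseAVector l1 l2 n2)) := by
  refine hbil.ext_frame_of_skew (vectorBracket_bilin _) hskew (vectorBracket_skew _)
    fun i j hij => ?_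
  fin_cases i <;> fin_cases j <;> first
    | exact absurd hij (by decide)
    | simp only [Fin.zero_eta, Fin.mk_one, Fin.reduceFinMk, h12, h23, h13, vectorBracket,
        ipForm_apply, ip_e_right, caseAVector, Matrix.cons_val]
      module

/-- Case A: for the bracket `[x₁,x₂] = λ₁x₁ + λ₂x₂`,
`[x₂,x₃] = ν₂x₂ − λ₁x₃`, `[x₁,x₃] = ν₂x₁ + λ₂x₃`: it satisfies the Jacobi identity;
the basic curvature components equal `λ₁² + λ₂² + ν₂²` and the remaining independent
components vanish; `ρ = (τ/3)g` with `τ = −6(λ₁² + λ₂² + ν₂²)` (Einstein); and every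
2-plane has sectional curvature `λ₁² + λ₂² + ν₂²`. -/
theorem case_A_properties
    (br : V → V → V) (hbil : Bilin br) (hskew : Skew br)
    (nabla : V → V → V) (hnbil : Bilin nabla) (hkos : Koszul br nabla)
    (l1 l2 n2 : ℝ)
    (h12 : br (e 0) (e 1) = l1 • e 0 + l2 • e 1)
    (h23 : br (e 1) (e 2) = n2 • e 1 - l1 • e 2)
    (h13 : br (e 0) (e 2) = n2 • e 0 + l2 • e 2) :
    -- (1) the Jacobi identity holds
    Jacobi br ∧
    -- (2) the curvature components
    (Rten br nabla (e 0) (e 1) (e 0) (e 1) = l1^2 + l2^2 + n2^2 ∧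
     Rten br nabla (e 0) (e 2) (e 0) (e 2) = l1^2 + l2^2 + n2^2 ∧
     Rten br nabla (e 1) (e 2) (e 1) (e 2) = l1^2 + l2^2 + n2^2 ∧
     Rten br nabla (e 0) (e 1) (e 0) (e 2) = 0 ∧
     Rten br nabla (e 0) (e 1) (e 1) (e 2) = 0 ∧
     Rten br nabla (e 0) (e 2) (e 1) (e 2) = 0) ∧
    -- (3) Ricci tensor, scalar curvature, Einstein condition
    ((∀ i j : Fin 3, ricci br nabla (e i) (e j) =
        if i = j then -2 * (l1^2 + l2^2 + n2^2) else 0) ∧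
     scalc br nabla = -6 * (l1^2 + l2^2 + n2^2) ∧
     (∀ x y : V, ricci br nabla x y = (scalc br nabla / 3) * ip x y)) ∧
    -- (4) constant sectional curvature
    (∀ x y : V, LinearIndependent ℝ ![x, y] →
      Rten br nabla x y x y / (ip x x * ip y y - (ip x y)^2) = l1^2 + l2^2 + n2^2) := by
  obtain rfl := hbil.eq_vectorBracket_caseAVector hskew h12 h23 h13
  obtain rfl := hkos.eq_vectorConnection hnbil
  have hK := hasConstantCurvature_vectorConnection (caseAVector l1 l2 n2)
  rw [ip_caseAVector_self] at hK
  refine ⟨vectorBracket_jacobi _, ?_, ⟨fun i j => ?_, hK.scalc_eq, hK.ricci_eq_scalc⟩,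
    fun x y => hK.sectional_eq⟩
  · simp [hK.rten_e]
  · rw [hK.ricci_eq, ip_e_e, mul_ite, mul_one, mul_zero]
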